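/- Let γ ∈ (0, 1) and β ≥ 0, and define the shifted sigmoid loss φ_β(α) := 1/(1 + exp(α − β)). Then φ_β is (φ_γ, [−1, 1])-calibrated if and only if β > 0. -/

import Mathlib

/-- Class-conditional risk of a margin-based loss `φ`:
`C_φ(α, η) = η φ(α) + (1 - η) φ(-α)`. -/
noncomputable def ccr (φ : ℝ → ℝ) (α η : ℝ) : ℝ := η * φ α + (1 - η) * φ (-α)

/-- Minimal class-conditional risk over a set `A` of achievable prediction values. -/
noncomputable def ccrStar (φ : ℝ → ℝ) (A : Set ℝ) (η : ℝ) : ℝ :=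
  sInf ((fun α => ccr φ α η) '' A)

/-- Excess class-conditional risk. -/
noncomputable def ccrExcess (φ : ℝ → ℝ) (A : Set ℝ) (α η : ℝ) : ℝ :=
  ccr φ α η - ccrStar φ A η

/-- `φ` is `(ψ, A)`-calibrated. -/
def Calibrated (φ ψ : ℝ → ℝ) (A : Set ℝ) : Prop :=
  ∀ ε > (0:ℝ), ∃ δ > (0:ℝ), ∀ η ∈ Set.Icc (0:ℝ) 1, ∀ α ∈ A,
    ccr φ α η < ccrStar φ A η + δ → ccr ψ α η < ccrStar ψ A η + ε

/-- The `γ`-robust 0-1 loss `φ_γ(α) = 1{α ≤ γ}` (the 0-1 loss is the case `γ = 0`). -/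
noncomputable def robustLoss (γ : ℝ) (α : ℝ) : ℝ := if α ≤ γ then 1 else 0

/-- Quasiconcavity of a real function on ℝ. -/
def QuasiconcaveFn (h : ℝ → ℝ) : Prop :=
  ∀ α₁ α₂ l : ℝ, 0 ≤ l → l ≤ 1 → min (h α₁) (h α₂) ≤ h (l * α₁ + (1 - l) * α₂)

/-- `φ` is quasiconcave even if its even part `α ↦ φ(α) + φ(-α)` is quasiconcave. -/
def QuasiconcaveEven (φ : ℝ → ℝ) : Prop := QuasiconcaveFn (fun α => φ α + φ (-α))

/-!
Twice the conditional risk is `E(α) + (2η - 1) (φ(α) - φ(-α))` with `E(α) = φ(α) + φ(-α)`, and the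
symmetry `(α, η) ↦ (-α, 1 - η)` reduces everything to `η ≥ 1/2`. On `[-r, r]` the odd term of a
nonincreasing loss is then smallest at `α = r`; if `E` decreases in `|α|` and `E(r) < E(γ)`, then
`r` minimizes the risk, predictions in `[-γ, γ]` pay for `E`, and predictions below `-γ` pay for
the odd term. Conversely, at `η = 1/2` only `E` is left, so no minimizer of `E` may lie in
`[-γ, γ]`. For the shifted sigmoid `E(α) = 1 + sinh β / (cosh β + cosh α)`, so the sign of `β`
decides whether `E` decreases in `|α|` or is minimal at `0`.
-/

open Set
open scoped Pointwise

/-- The even part `φ(α) + φ(-α)` of a loss `φ`, without the factor `1/2`, as in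
`QuasiconcaveEven`; at `η = 1/2` it is twice the class-conditional risk. -/
def evenPart (φ : ℝ → ℝ) (α : ℝ) : ℝ := φ α + φ (-α)

section ClassConditionalRisk

variable {φ ψ : ℝ → ℝ} {A : Set ℝ} {a η : ℝ}

theorem ccr_neg_one_sub (φ : ℝ → ℝ) (α η : ℝ) : ccr φ (-α) (1 - η) = ccr φ α η := by
  simp only [ccr, neg_neg]
  ring

theorem two_mul_ccr (φ : ℝ → ℝ) (α η : ℝ) :
    2 * ccr φ α η = evenPart φ α + (2 * η - 1) * (φ α - φ (-α)) := by
  simp only [ccr, evenPart]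
  ring

theorem ccr_half (φ : ℝ → ℝ) (α : ℝ) : ccr φ α (1 / 2) = evenPart φ α / 2 := by
  linarith [two_mul_ccr φ α (1 / 2)]

theorem ccrStar_one_sub (hA : -A = A) (φ : ℝ → ℝ) (η : ℝ) :
    ccrStar φ A (1 - η) = ccrStar φ A η := by
  unfold ccrStar
  conv_lhs => rw [← hA, ← image_neg_eq_neg, image_image]
  simp only [ccr_neg_one_sub]

theorem ccrStar_eq_of_isMinOn (ha : a ∈ A) (hmin : IsMinOn (fun α => ccr φ α η) A a) :
    ccrStar φ A η = ccr φ a η :=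
  IsLeast.csInf_eq ⟨mem_image_of_mem _ ha, forall_mem_image.2 hmin⟩

theorem calibrated_of_forall_half_le (hA : -A = A)
    (h : ∀ ε > 0, ∃ δ > 0, ∀ η ∈ Icc (1 / 2 : ℝ) 1, ∀ α ∈ A,
      ccr φ α η < ccrStar φ A η + δ → ccr ψ α η < ccrStar ψ A η + ε) :
    Calibrated φ ψ A := by
  intro ε hε
  obtain ⟨δ, hδ, hcal⟩ := h ε hε
  refine ⟨δ, hδ, fun η hη α hα hlt => ?_⟩
  rcases le_total (1 / 2) η with hη_half | hη_half
  · exact hcal η ⟨hη_half, hη.2⟩ α hα hlt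
  · have hneg : -α ∈ A := by rwa [← hA, neg_mem_neg]
    simpa only [ccr_neg_one_sub, ccrStar_one_sub hA] using
      hcal (1 - η) ⟨by linarith, by linarith [hη.1]⟩ (-α) hneg
        (by rwa [ccr_neg_one_sub, ccrStar_one_sub hA])

end ClassConditionalRisk

section EvenPart

variable {φ : ℝ → ℝ}

theorem evenPart_abs (φ : ℝ → ℝ) (α : ℝ) : evenPart φ |α| = evenPart φ α := by
  rcases abs_choice α with h | h <;> simp only [h, evenPart, neg_neg, add_comm]

theorem evenPart_le_evenPart {r x y : ℝ} (heven : AntitoneOn (evenPart φ) (Icc 0 r))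
    (hxy : |x| ≤ |y|) (hy : |y| ≤ r) : evenPart φ y ≤ evenPart φ x := by
  rw [← evenPart_abs φ x, ← evenPart_abs φ y]
  exact heven ⟨abs_nonneg x, hxy.trans hy⟩ ⟨abs_nonneg y, hy⟩ hxy

end EvenPart

section RobustLoss

variable {A : Set ℝ} {α γ η : ℝ}

theorem ccr_robustLoss_of_lt (hγ : 0 ≤ γ) (h : γ < α) (η : ℝ) :
    ccr (robustLoss γ) α η = 1 - η := by
  simp [ccr, robustLoss, h.not_ge, show -α ≤ γ by linarith]

theorem ccr_robustLoss_of_lt_neg (hγ : 0 ≤ γ) (h : α < -γ) (η : ℝ) :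
    ccr (robustLoss γ) α η = η := by
  rw [← ccr_neg_one_sub, ccr_robustLoss_of_lt hγ (lt_neg.1 h), sub_sub_cancel]

theorem ccr_robustLoss_of_abs_le (h : |α| ≤ γ) (η : ℝ) : ccr (robustLoss γ) α η = 1 := by
  simp [ccr, robustLoss, (abs_le.1 h).2, neg_le.1 (abs_le.1 h).1]

theorem one_sub_le_ccr_robustLoss (hγ : 0 ≤ γ) (hη : 1 / 2 ≤ η) (α : ℝ) :
    1 - η ≤ ccr (robustLoss γ) α η := by
  rcases le_or_gt |α| γ with h | h
  · rw [ccr_robustLoss_of_abs_le h]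
    linarith
  rcases lt_abs.1 h with h | h
  · rw [ccr_robustLoss_of_lt hγ h]
  · rw [ccr_robustLoss_of_lt_neg hγ (lt_neg.1 h)]
    linarith

theorem ccrStar_robustLoss (hγ : 0 ≤ γ) (hη : 1 / 2 ≤ η) (hα : α ∈ A) (hγα : γ < α) :
    ccrStar (robustLoss γ) A η = 1 - η := by
  rw [← ccr_robustLoss_of_lt hγ hγα η]
  refine ccrStar_eq_of_isMinOn hα (isMinOn_iff.2 fun x _ => ?_)
  rw [ccr_robustLoss_of_lt hγ hγα]
  exact one_sub_le_ccr_robustLoss hγ hη x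

end RobustLoss

theorem not_calibrated_robustLoss_of_isMinOn_evenPart {φ : ℝ → ℝ} {A : Set ℝ} {a b γ : ℝ}
    (ha : a ∈ A) (haγ : |a| ≤ γ) (hmin : IsMinOn (evenPart φ) A a) (hb : b ∈ A) (hγb : γ < b) :
    ¬ Calibrated φ (robustLoss γ) A := by
  intro hcal
  have hγ : 0 ≤ γ := (abs_nonneg a).trans haγ
  obtain ⟨δ, hδ, h⟩ := hcal (1 / 2) (by norm_num)
  have hφ : ccrStar φ A (1 / 2) = ccr φ a (1 / 2) := by
    refine ccrStar_eq_of_isMinOn ha (isMinOn_iff.2 fun x hx => ?_)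
    rw [ccr_half, ccr_half]
    gcongr
    exact hmin hx
  have hrobust := h (1 / 2) (by norm_num) a ha (by linarith)
  rw [ccr_robustLoss_of_abs_le haγ, ccrStar_robustLoss hγ le_rfl hb hγb] at hrobust
  norm_num at hrobust

section Sufficiency

variable {φ : ℝ → ℝ} {r α γ η : ℝ}

theorem evenPart_sub_le_two_mul_ccr_sub (hφ : AntitoneOn φ (Icc (-r) r)) (hα : α ∈ Icc (-r) r)
    (hη : 1 / 2 ≤ η) :
    evenPart φ α - evenPart φ r ≤ 2 * (ccr φ α η - ccr φ r η) := by
  obtain ⟨hrα, hαr⟩ := hα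
  have hr : -r ≤ r := hrα.trans hαr
  have hφα : φ r ≤ φ α := hφ ⟨hrα, hαr⟩ ⟨hr, le_rfl⟩ hαr
  have hφ_neg : φ (-α) ≤ φ (-r) :=
    hφ ⟨le_rfl, hr⟩ ⟨neg_le_neg hαr, neg_le.1 hrα⟩ (neg_le_neg hαr)
  have hodd : 0 ≤ (2 * η - 1) * ((φ α - φ (-α)) - (φ r - φ (-r))) :=
    mul_nonneg (by linarith) (by linarith)
  linarith [two_mul_ccr φ α η, two_mul_ccr φ r η]

theorem ccrStar_Icc_eq_ccr_right (hr : 0 ≤ r) (hφ : AntitoneOn φ (Icc (-r) r))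
    (heven : AntitoneOn (evenPart φ) (Icc 0 r)) (hη : 1 / 2 ≤ η) :
    ccrStar φ (Icc (-r) r) η = ccr φ r η := by
  refine ccrStar_eq_of_isMinOn (right_mem_Icc.2 (neg_le_self hr)) (isMinOn_iff.2 fun x hx => ?_)
  have hE : evenPart φ r ≤ evenPart φ x :=
    evenPart_le_evenPart heven ((abs_le.2 hx).trans (le_abs_self r)) (abs_of_nonneg hr).le
  linarith [evenPart_sub_le_two_mul_ccr_sub hφ hx hη]

theorem mul_sub_le_two_mul_ccr_sub (hφ : AntitoneOn φ (Icc (-r) r))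
    (heven : AntitoneOn (evenPart φ) (Icc 0 r)) (hα : α ∈ Icc (-r) 0) (hη : 1 / 2 ≤ η) :
    (2 * η - 1) * (φ (-r) - φ r) ≤ 2 * (ccr φ α η - ccr φ r η) := by
  obtain ⟨hrα, hα0⟩ := hα
  have hE : evenPart φ r ≤ evenPart φ α :=
    evenPart_le_evenPart heven (by rw [abs_of_nonpos hα0, abs_of_nonneg] <;> linarith)
      (abs_of_nonneg (by linarith)).le
  have hφα : φ (-α) ≤ φ α :=
    hφ ⟨hrα, by linarith⟩ ⟨by linarith, by linarith⟩ (by linarith)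
  have hodd : 0 ≤ (2 * η - 1) * (φ α - φ (-α)) := mul_nonneg (by linarith) (by linarith)
  linarith [two_mul_ccr φ α η, two_mul_ccr φ r η]

theorem apply_lt_apply_neg_of_evenPart_lt (hφ : AntitoneOn φ (Icc (-r) r)) (hα : α ∈ Icc (-r) r)
    (hlt : evenPart φ r < evenPart φ α) : φ r < φ (-r) := by
  obtain ⟨hrα, hαr⟩ := hα
  have hr : -r ∈ Icc (-r) r := ⟨le_rfl, hrα.trans hαr⟩
  have hφα : φ α ≤ φ (-r) := hφ hr ⟨hrα, hαr⟩ hrα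
  have hφ_neg : φ (-α) ≤ φ (-r) :=
    hφ hr ⟨neg_le_neg hαr, neg_le.1 hrα⟩ (neg_le_neg hαr)
  simp only [evenPart] at hlt
  linarith

theorem calibrated_robustLoss_of_evenPart_lt (hγ : 0 ≤ γ) (hγr : γ < r)
    (hφ : AntitoneOn φ (Icc (-r) r)) (heven : AntitoneOn (evenPart φ) (Icc 0 r))
    (hlt : evenPart φ r < evenPart φ γ) :
    Calibrated φ (robustLoss γ) (Icc (-r) r) := by
  have hr0 : 0 ≤ r := hγ.trans hγr.le
  have hr : r ∈ Icc (-r) r := right_mem_Icc.2 (neg_le_self hr0)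
  have hE : 0 < evenPart φ γ - evenPart φ r := sub_pos.2 hlt
  have hD : 0 < φ (-r) - φ r :=
    sub_pos.2 (apply_lt_apply_neg_of_evenPart_lt hφ ⟨by linarith, hγr.le⟩ hlt)
  refine calibrated_of_forall_half_le (by rw [neg_Icc, neg_neg]) fun ε hε =>
    ⟨min ((evenPart φ γ - evenPart φ r) / 2) (ε * (φ (-r) - φ r) / 2),
      lt_min (half_pos hE) (half_pos (mul_pos hε hD)), fun η hη α hα hnear => ?_⟩
  rw [ccrStar_Icc_eq_ccr_right hr0 hφ heven hη.1, ← sub_lt_iff_lt_add', lt_min_iff] at hnear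
  rw [ccrStar_robustLoss hγ hη.1 hr hγr]
  rcases le_or_gt |α| γ with h | h
  · have hEα : evenPart φ γ ≤ evenPart φ α :=
      evenPart_le_evenPart heven (h.trans (le_abs_self γ)) ((abs_of_nonneg hγ).trans_le hγr.le)
    linarith [evenPart_sub_le_two_mul_ccr_sub hφ hα hη.1, hnear.1]
  rcases lt_abs.1 h with h | h
  · rw [ccr_robustLoss_of_lt hγ h]
    linarith
  · have hodd := mul_sub_le_two_mul_ccr_sub hφ heven ⟨hα.1, by linarith⟩ hη.1
    have hηε : 2 * η - 1 < ε := lt_of_mul_lt_mul_right (by linarith [hnear.2]) hD.le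
    rw [ccr_robustLoss_of_lt_neg hγ (lt_neg.1 h)]
    linarith

end Sufficiency

section ShiftedSigmoid

open Real

variable {β : ℝ}

/-- The sigmoid loss `1 / (1 + e ^ α)` shifted horizontally by `β`, written `φ_β` in the paper. -/
noncomputable def shiftedSigmoid (β α : ℝ) : ℝ := 1 / (1 + exp (α - β))

theorem shiftedSigmoid_antitone (β : ℝ) : Antitone (shiftedSigmoid β) := fun x y hxy =>
  one_div_le_one_div_of_le (by positivity) (by gcongr)

theorem evenPart_shiftedSigmoid (β α : ℝ) :
    evenPart (shiftedSigmoid β) α = 1 + sinh β / (cosh β + cosh α) := by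
  have hden : cosh β + cosh α ≠ 0 := by positivity
  simp only [evenPart, shiftedSigmoid, sinh_eq, cosh_eq, exp_sub, exp_neg] at hden ⊢
  have := exp_pos α
  have := exp_pos β
  field_simp at hden ⊢
  ring

theorem strictAntiOn_evenPart_shiftedSigmoid (hβ : 0 < β) :
    StrictAntiOn (evenPart (shiftedSigmoid β)) (Ici 0) := by
  intro x hx y hy hxy
  have hcosh : cosh x < cosh y := cosh_strictMonoOn hx hy hxy
  have hsinh : 0 < sinh β := sinh_pos_iff.2 hβ
  simp only [evenPart_shiftedSigmoid]
  gcongr 1 + ?_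
  exact div_lt_div_of_pos_left hsinh (by positivity) (by gcongr)

theorem evenPart_shiftedSigmoid_zero_le (hβ : β ≤ 0) (α : ℝ) :
    evenPart (shiftedSigmoid β) 0 ≤ evenPart (shiftedSigmoid β) α := by
  rw [evenPart_shiftedSigmoid, evenPart_shiftedSigmoid, cosh_zero]
  gcongr 1 + ?_
  have hcosh : cosh β + 1 ≤ cosh β + cosh α := by gcongr; exact one_le_cosh α
  rw [← neg_le_neg_iff, ← neg_div, ← neg_div]
  exact div_le_div_of_nonneg_left (neg_nonneg.2 (sinh_nonpos_iff.2 hβ)) (by positivity) hcosh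

end ShiftedSigmoid

theorem sigmoid_calibrated_iff_general {γ r : ℝ} (hγ : 0 ≤ γ) (hγr : γ < r) (β : ℝ) :
    Calibrated (shiftedSigmoid β) (robustLoss γ) (Icc (-r) r) ↔ 0 < β := by
  have hr : 0 < r := hγ.trans_lt hγr
  refine ⟨fun hcal => ?_, fun hβ => ?_⟩
  · by_contra! hβ
    have hzero : (0 : ℝ) ∈ Icc (-r) r := ⟨by linarith, hr.le⟩
    have hmin : IsMinOn (evenPart (shiftedSigmoid β)) (Icc (-r) r) 0 :=
      isMinOn_iff.2 fun α _ => evenPart_shiftedSigmoid_zero_le hβ α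
    exact not_calibrated_robustLoss_of_isMinOn_evenPart hzero (by rwa [abs_zero]) hmin
      (right_mem_Icc.2 (by linarith)) hγr hcal
  · have heven := strictAntiOn_evenPart_shiftedSigmoid hβ
    exact calibrated_robustLoss_of_evenPart_lt hγ hγr ((shiftedSigmoid_antitone β).antitoneOn _)
      (heven.antitoneOn.mono Icc_subset_Ici_self) (heven hγ hr.le hγr)

/-- The shifted sigmoid loss is `(φ_γ, [-1,1])`-calibrated iff `β > 0`. -/
theorem sigmoid_calibrated_iff
    (γ : ℝ) (hγ : γ ∈ Set.Ioo (0:ℝ) 1) (β : ℝ) (hβ : 0 ≤ β) :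
    Calibrated (fun α => 1 / (1 + Real.exp (α - β))) (robustLoss γ)
        (Set.Icc (-1:ℝ) 1) ↔ 0 < β :=
  sigmoid_calibrated_iff_general hγ.1.le hγ.2 β
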